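/- arXiv:2110.14592 — 2 statements merged into one kernel-verified Lean document; each statement's English description precedes it below -/
import Mathlib

section
/- Assume the bounded distortion hypothesis holds for (G, ℓ), with constant c > 0 and finite set B ⊆ G. Let F ⊆ G be a subset and ν a probability measure on G with ν(F) = 1. Then there exist a sequence (σ_i)_{i≥1} of elements of B and, for every integer k ≥ 2, a subset E_k ⊆ F^k such that: (1) for every (g₁,…,g_k) ∈ E_k, ℓ(g₁σ₁g₂σ₂⋯g_{k−1}σ_{k−1}g_k) ≥ ℓ(g₁) + ℓ(g₂) + ⋯ + ℓ(g_k) − (k−1)c; and (2) ν^k(E_k) ≥ |B|^{−(k−1)}, where ν^k denotes the k-fold product measure of ν on G^k. -/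
/-!
The sequence is chosen greedily. Suppose `σ₁, …, σₙ` have been chosen and let `A ⊆ F^{n+1}` be the
set of tuples along which `ℓ` loses at most `n * c`. For `g ∈ A` and `h ∈ F`, bounded distortion
applied to `g₁σ₁⋯σₙgₙ₊₁` and `h` provides some `s ∈ B` for which the tuple `(g, h)` loses at most
`(n + 1) * c`. Thus `A × F` is covered by `|B|` sets, one for each value of `s`, and for some `s`
the corresponding set carries at least the fraction `1 / |B|` of the measure of `A × F`. This `s`
is `σₙ₊₁`.
-/

open MeasureTheory Filter Topology ProbabilityTheory
open scoped ENNReal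

/-- The alternating product `g₁ σᵢ g₂ σ_{i+1} ⋯ σ_{i+k-2} g_k` of a list `[g₁, …, g_k]`,
interleaving the elements of the sequence `σ` starting from index `i`. -/
noncomputable def altProdFrom {G : Type*} [Group G] (σ : ℕ → G) : ℕ → List G → G
  | _, [] => 1
  | _, [g] => g
  | i, g :: g' :: gs => g * σ i * altProdFrom σ (i + 1) (g' :: gs)

theorem exists_inv_card_mul_measure_le {Ω ι : Type*} [MeasurableSpace Ω] (μ : Measure Ω)
    {B : Finset ι} (hB : B.Nonempty) {S : Set Ω} {t : ι → Set Ω} (hcover : S ⊆ ⋃ s ∈ B, t s) :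
    ∃ s ∈ B, (B.card : ℝ≥0∞)⁻¹ * μ S ≤ μ (t s) := by
  refine ENNReal.exists_le_of_sum_le hB ?_
  calc ∑ _s ∈ B, (B.card : ℝ≥0∞)⁻¹ * μ S = μ S := by
        rw [Finset.sum_const, nsmul_eq_mul, ENNReal.mul_inv_cancel_left
          (Nat.cast_ne_zero.2 hB.card_ne_zero) (ENNReal.natCast_ne_top _)]
    _ ≤ ∑ s ∈ B, μ (t s) := (measure_mono hcover).trans (measure_biUnion_finset_le B t)

theorem measure_pi_apply_mem_and_removeNth_mem {n : ℕ} {X : Fin (n + 1) → Type*}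
    [∀ i, MeasurableSpace (X i)] (μ : ∀ i, Measure (X i)) [∀ i, SigmaFinite (μ i)]
    (i : Fin (n + 1)) (F : Set (X i)) (A : Set (∀ j, X (i.succAbove j))) :
    Measure.pi μ {g | g i ∈ F ∧ i.removeNth g ∈ A} =
      μ i F * Measure.pi (fun j => μ (i.succAbove j)) A := by
  rw [← Measure.prod_prod]
  exact (measurePreserving_piFinSuccAbove μ i).measure_preimage_equiv (F ×ˢ A)

section GreedyProducts

variable {G : Type*}

/-- The bounded distortion hypothesis for a function `ℓ`, which need not be a word length. -/
def BoundedDistortion [Mul G] (ℓ : G → ℝ) (c : ℝ) (B : Finset G) : Prop :=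
  ∀ x y, ∃ s ∈ B, ℓ x + ℓ y - c ≤ ℓ (x * s * y)

/-- The tuples in `F^{n+1}` along which the product `p` is almost additive for `ℓ`, with total loss
at most `n * c`. Here `p` stands for an alternating product whose factors from `B` are fixed. -/
def almostAdditiveTuples (ℓ : G → ℝ) (c : ℝ) (F : Set G) {n : ℕ} (p : (Fin (n + 1) → G) → G) :
    Set (Fin (n + 1) → G) :=
  {g | (∀ i, g i ∈ F) ∧ ∑ i, ℓ (g i) - n * c ≤ ℓ (p g)}

/-- The alternating product with one more variable, `(g, h) ↦ p(g) s h`. -/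
def snocProd [Mul G] {n : ℕ} (p : (Fin (n + 1) → G) → G) (s : G) : (Fin (n + 2) → G) → G :=
  fun g => p (Fin.init g) * s * g (Fin.last (n + 1))

/-- The alternating products in which each new factor is selected by `s` from the product built so
far. -/
def greedyProd [Mul G] (s : ∀ n, ((Fin (n + 1) → G) → G) → G) : ∀ n, (Fin (n + 1) → G) → G
  | 0 => fun g => g 0
  | n + 1 => snocProd (greedyProd s n) (s n (greedyProd s n))

theorem altProdFrom_ofFn_succ_last [Group G] (σ : ℕ → G) (i : ℕ) {n : ℕ} (g : Fin (n + 2) → G) :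
    altProdFrom σ i (List.ofFn g) =
      altProdFrom σ i (List.ofFn (Fin.init g)) * σ (i + n) * g (Fin.last (n + 1)) := by
  induction n generalizing i with
  | zero => simp [altProdFrom, Fin.init]
  | succ n ih =>
    have hcons {m : ℕ} (f : Fin (m + 2) → G) : altProdFrom σ i (List.ofFn f) =
        f 0 * σ i * altProdFrom σ (i + 1) (List.ofFn (Fin.tail f)) := by
      simp only [List.ofFn_succ, altProdFrom, Fin.tail]
    rw [hcons, hcons, ih, Fin.tail_init_eq_init_tail, Nat.add_right_comm i 1 n]
    simp only [mul_assoc]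
    rfl

theorem altProdFrom_ofFn_eq_greedyProd [Group G] (s : ∀ n, ((Fin (n + 1) → G) → G) → G) {n : ℕ}
    (g : Fin (n + 1) → G) :
    altProdFrom (fun i => s (i - 1) (greedyProd s (i - 1))) 1 (List.ofFn g) =
      greedyProd s n g := by
  induction n with
  | zero => simp [altProdFrom, greedyProd]
  | succ n ih => rw [altProdFrom_ofFn_succ_last, ih, Nat.add_sub_cancel_left, greedyProd, snocProd]

variable {ℓ : G → ℝ} {c : ℝ} {B : Finset G}

theorem BoundedDistortion.nonempty [Mul G] [Nonempty G] (h : BoundedDistortion ℓ c B) :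
    B.Nonempty :=
  let ⟨x⟩ := ‹Nonempty G›
  let ⟨s, hs, _⟩ := h x x
  ⟨s, hs⟩

theorem BoundedDistortion.subset_iUnion_almostAdditiveTuples [Mul G]
    (h : BoundedDistortion ℓ c B) (F : Set G) {n : ℕ} (p : (Fin (n + 1) → G) → G) :
    {g : Fin (n + 2) → G | g (Fin.last (n + 1)) ∈ F ∧
        (Fin.last (n + 1)).removeNth g ∈ almostAdditiveTuples ℓ c F p} ⊆
      ⋃ s ∈ B, almostAdditiveTuples ℓ c F (snocProd p s) := by
  rintro g ⟨hlastF, hg⟩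
  rw [Fin.removeNth_last] at hg
  obtain ⟨hinitF, hinit⟩ := hg
  obtain ⟨s, hs, hle⟩ := h (p (Fin.init g)) (g (Fin.last (n + 1)))
  refine Set.mem_biUnion hs ⟨Fin.lastCases hlastF hinitF, ?_⟩
  calc ∑ i, ℓ (g i) - ↑(n + 1) * c
      = (∑ i, ℓ (Fin.init g i) - n * c) + ℓ (g (Fin.last (n + 1))) - c := by
        rw [Fin.sum_univ_castSucc]
        simp only [Fin.init]
        push_cast
        ring
    _ ≤ ℓ (p (Fin.init g)) + ℓ (g (Fin.last (n + 1))) - c := by gcongr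
    _ ≤ ℓ (snocProd p s g) := hle

variable [MeasurableSpace G] (F : Set G) (ν : Measure G) [SigmaFinite ν]

theorem BoundedDistortion.exists_measure_almostAdditiveTuples_snocProd_ge [Mul G] [Nonempty G]
    (h : BoundedDistortion ℓ c B) {n : ℕ} (p : (Fin (n + 1) → G) → G) :
    ∃ s ∈ B, (B.card : ℝ≥0∞)⁻¹ *
        (ν F * Measure.pi (fun _ => ν) (almostAdditiveTuples ℓ c F p)) ≤
      Measure.pi (fun _ => ν) (almostAdditiveTuples ℓ c F (snocProd p s)) := by
  have hprod := measure_pi_apply_mem_and_removeNth_mem (fun _ : Fin (n + 2) => ν)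
    (Fin.last (n + 1)) F (almostAdditiveTuples ℓ c F p)
  rw [← hprod]
  exact exists_inv_card_mul_measure_le _ h.nonempty (h.subset_iUnion_almostAdditiveTuples F p)

theorem BoundedDistortion.exists_measure_almostAdditiveTuples_greedyProd_ge [Mul G] [Nonempty G]
    (h : BoundedDistortion ℓ c B) :
    ∃ s : ∀ n, ((Fin (n + 1) → G) → G) → G, (∀ n p, s n p ∈ B) ∧
      ∀ n, (B.card : ℝ≥0∞)⁻¹ ^ n * ν F ^ (n + 1) ≤
        Measure.pi (fun _ => ν) (almostAdditiveTuples ℓ c F (greedyProd s n)) := by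
  choose s hsB hs using fun (n : ℕ) (p : (Fin (n + 1) → G) → G) =>
    h.exists_measure_almostAdditiveTuples_snocProd_ge F ν p
  refine ⟨s, hsB, fun n => ?_⟩
  induction n with
  | zero =>
    have hbase : almostAdditiveTuples ℓ c F (greedyProd s 0) = Set.univ.pi fun _ => F := by
      ext g
      simp [almostAdditiveTuples, greedyProd]
    rw [hbase, Measure.pi_pi]
    simp
  | succ n ih =>
    calc (B.card : ℝ≥0∞)⁻¹ ^ (n + 1) * ν F ^ (n + 1 + 1)
        = (B.card : ℝ≥0∞)⁻¹ * (ν F * ((B.card : ℝ≥0∞)⁻¹ ^ n * ν F ^ (n + 1))) := by ring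
      _ ≤ (B.card : ℝ≥0∞)⁻¹ *
          (ν F * Measure.pi (fun _ => ν) (almostAdditiveTuples ℓ c F (greedyProd s n))) := by
        gcongr
      _ ≤ Measure.pi (fun _ => ν) (almostAdditiveTuples ℓ c F (greedyProd s (n + 1))) :=
        hs n (greedyProd s n)

end GreedyProducts

theorem selection_lemma_general {G : Type*} [Group G] [MeasurableSpace G] {ℓ : G → ℝ} {c : ℝ}
    {B : Finset G} (hdist : BoundedDistortion ℓ c B) (F : Set G) (ν : Measure G) [SigmaFinite ν] :
    ∃ σ : ℕ → G, (∀ i, σ i ∈ B) ∧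
      ∀ k : ℕ, 1 ≤ k → ∃ E : Set (Fin k → G),
        (∀ g ∈ E, ∀ i, g i ∈ F) ∧
        (∀ g ∈ E, (∑ i, ℓ (g i)) - ((k : ℝ) - 1) * c ≤ ℓ (altProdFrom σ 1 (List.ofFn g))) ∧
        (B.card : ℝ≥0∞)⁻¹ ^ (k - 1) * ν F ^ k ≤ Measure.pi (fun _ : Fin k => ν) E := by
  obtain ⟨s, hsB, hs⟩ := hdist.exists_measure_almostAdditiveTuples_greedyProd_ge F ν
  refine ⟨fun i => s (i - 1) (greedyProd s (i - 1)), fun i => hsB _ _, fun k hk => ?_⟩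
  obtain ⟨n, rfl⟩ := Nat.exists_eq_add_of_le' hk
  refine ⟨almostAdditiveTuples ℓ c F (greedyProd s n), fun g hg => hg.1, fun g hg => ?_, hs n⟩
  rw [altProdFrom_ofFn_eq_greedyProd, Nat.cast_add_one, add_sub_cancel_right]
  exact hg.2

/-- selection of sets on which the word length is almost additive along the
alternating products `g₁σ₁g₂σ₂⋯g_{k-1}σ_{k-1}g_k`. -/
theorem selection_lemma
    {G : Type*} [Group G] [Countable G] [MeasurableSpace G] [MeasurableSingletonClass G]
    -- `T` is a symmetric generating set of `G`
    (T : Set G) (hTsym : ∀ t ∈ T, t⁻¹ ∈ T) (hTgen : Subgroup.closure T = ⊤)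
    -- `ℓ` is the word length associated with `T`
    (ℓ : G → ℕ)
    (hℓ : ∀ g : G, ℓ g = sInf {n : ℕ | ∃ l : List G, l.length = n ∧ (∀ x ∈ l, x ∈ T) ∧ l.prod = g})
    -- bounded distortion hypothesis: `c > 0`, `B ⊆ G` finite, and for all `x y` there is
    -- `σ ∈ B` with `ℓ(xσy) ≥ ℓ(x) + ℓ(y) - c`
    (c : ℝ) (hc : 0 < c) (B : Finset G)
    (hdist : ∀ x y : G, ∃ σ ∈ B, (ℓ x : ℝ) + (ℓ y : ℝ) - c ≤ (ℓ (x * σ * y) : ℝ))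
    (F : Set G) (ν : Measure G) [IsProbabilityMeasure ν] (hνF : ν F = 1) :
    ∃ σ : ℕ → G, (∀ i, σ i ∈ B) ∧
      ∀ k : ℕ, 2 ≤ k → ∃ E : Set (Fin k → G),
        -- `E ⊆ F^k`
        (∀ g ∈ E, ∀ i, g i ∈ F) ∧
        -- almost additivity: `ℓ(g₁σ₁⋯σ_{k-1}g_k) ≥ ℓ(g₁) + ⋯ + ℓ(g_k) - (k-1)c`
        (∀ g ∈ E,
          (∑ i, (ℓ (g i) : ℝ)) - ((k : ℝ) - 1) * c ≤ (ℓ (altProdFrom σ 1 (List.ofFn g)) : ℝ)) ∧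
        -- `ν^k(E) ≥ |B|^{-(k-1)}`
        ((B.card : ℝ≥0∞))⁻¹ ^ (k - 1) ≤ Measure.pi (fun _ : Fin k => ν) E := by
  obtain ⟨σ, hσB, hσ⟩ := selection_lemma_general (ℓ := fun g => (ℓ g : ℝ)) hdist F ν
  exact ⟨σ, hσB, fun k hk => by simpa [hνF] using hσ k (one_le_two.trans hk)⟩
end

section
/- Let X be a Hausdorff regular topological space and (ν_n)_{n≥1} a sequence of Borel probability measures on X. Define I : X → [0,∞] by I(x) = sup{ −liminf_{n→∞} (1/n) log ν_n(V) : V ⊆ X open, x ∈ V }, and assume that for every x ∈ X one also has I(x) = sup{ −limsup_{n→∞} (1/n) log ν_n(V) : V ⊆ X open, x ∈ V }. Then (ν_n)_{n≥1} satisfies the weak large deviation principle with rate function I: for every open set U ⊆ X, liminf_{n→∞} (1/n) log ν_n(U) ≥ −inf_U I, and for every compact set K ⊆ X, limsup_{n→∞} (1/n) log ν_n(K) ≤ −inf_K I. -/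
/-!
Write `J x` for the supremum of `-limsup (1/n) log ν_n(V)` over the open `V ∋ x`. The lower bound
for open sets always holds with `I`, and the upper bound for compact sets always holds with `J`;
the hypothesis `I = J` only joins them.

An open set `U` is one of the neighbourhoods defining `I x` for each `x ∈ U`, which is the lower
bound. For the upper bound, if `b < inf_K J` then each point of `K` has a neighbourhood of upper
rate at most `-b`. The upper rate of a finite union is the maximum of the upper rates, so by
compactness `K` has upper rate at most `-b` as well.
-/

open MeasureTheory Filter Topology
open scoped ENNReal

/-- `(1/n) log ν_n(A)`, with the convention `log 0 = -∞` (values in `EReal`). -/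
noncomputable def expRateOf {X : Type*} [MeasurableSpace X] (ν : ℕ → Measure X) (A : Set X)
    (n : ℕ) : EReal :=
  (((n : ℝ)⁻¹ : ℝ) : EReal) * ENNReal.log (ν n A)

/-- The function `I(x) = sup { - liminf_n (1/n) log ν_n(V) : V open, x ∈ V }`. -/
noncomputable def rateOf {X : Type*} [TopologicalSpace X] [MeasurableSpace X]
    (ν : ℕ → Measure X) (x : X) : EReal :=
  ⨆ V ∈ {V : Set X | IsOpen V ∧ x ∈ V}, - Filter.liminf (expRateOf ν V) Filter.atTop

section

variable {X : Type*} [MeasurableSpace X] (ν : ℕ → Measure X)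

lemma limsup_expRateOf_eq_expGrowthSup (A : Set X) :
    limsup (expRateOf ν A) atTop = ExpGrowth.expGrowthSup fun n ↦ ν n A := by
  refine congrArg (limsup · atTop) (funext fun n ↦ ?_)
  rw [expRateOf, EReal.div_eq_inv_mul, EReal.coe_inv, EReal.coe_natCast]

lemma limsup_expRateOf_empty : limsup (expRateOf ν ∅) atTop = ⊥ := by
  simp only [limsup_expRateOf_eq_expGrowthSup, measure_empty]
  exact ExpGrowth.expGrowthSup_zero

lemma limsup_expRateOf_mono {A B : Set X} (hAB : A ⊆ B) :
    limsup (expRateOf ν A) atTop ≤ limsup (expRateOf ν B) atTop := by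
  simp only [limsup_expRateOf_eq_expGrowthSup]
  exact ExpGrowth.expGrowthSup_monotone fun n ↦ measure_mono hAB

lemma limsup_expRateOf_union (A B : Set X) :
    limsup (expRateOf ν (A ∪ B)) atTop =
      limsup (expRateOf ν A) atTop ⊔ limsup (expRateOf ν B) atTop := by
  refine le_antisymm ?_ (sup_le (limsup_expRateOf_mono ν Set.subset_union_left)
    (limsup_expRateOf_mono ν Set.subset_union_right))
  simp only [limsup_expRateOf_eq_expGrowthSup]
  calc ExpGrowth.expGrowthSup (fun n ↦ ν n (A ∪ B))
      ≤ ExpGrowth.expGrowthSup ((fun n ↦ ν n A) + fun n ↦ ν n B) :=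
        ExpGrowth.expGrowthSup_monotone fun n ↦ measure_union_le A B
    _ = ExpGrowth.expGrowthSup (fun n ↦ ν n A) ⊔ ExpGrowth.expGrowthSup (fun n ↦ ν n B) :=
        ExpGrowth.expGrowthSup_add

variable [TopologicalSpace X]

lemma limsup_expRateOf_le_of_isCompact_of_forall_nhdsWithin {K : Set X} (hK : IsCompact K)
    {c : EReal} (hc : ∀ x ∈ K, ∃ V ∈ 𝓝[K] x, limsup (expRateOf ν V) atTop ≤ c) :
    limsup (expRateOf ν K) atTop ≤ c := by
  refine hK.induction_on (p := fun A ↦ limsup (expRateOf ν A) atTop ≤ c) ?empty ?mono ?union hc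
  case empty => exact (limsup_expRateOf_empty ν).trans_le bot_le
  case mono => exact fun A B hAB hB ↦ (limsup_expRateOf_mono ν hAB).trans hB
  case union => exact fun A B hA hB ↦ (limsup_expRateOf_union ν A B).trans_le (sup_le hA hB)

/-- The function `J(x) = sup { - limsup_n (1/n) log ν_n(V) : V open, x ∈ V }`, the counterpart of
`rateOf` that governs the upper bound for compact sets. -/
noncomputable def limsupRateOf (x : X) : EReal :=
  ⨆ V ∈ {V : Set X | IsOpen V ∧ x ∈ V}, - limsup (expRateOf ν V) atTop

lemma lt_limsupRateOf_iff {x : X} {b : EReal} :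
    b < limsupRateOf ν x ↔
      ∃ V, (IsOpen V ∧ x ∈ V) ∧ limsup (expRateOf ν V) atTop < -b := by
  simp only [limsupRateOf, lt_iSup_iff, Set.mem_ofPred_eq, exists_prop, EReal.lt_neg_comm]

lemma neg_liminf_expRateOf_le_rateOf {U : Set X} (hU : IsOpen U) {x : X} (hx : x ∈ U) :
    -liminf (expRateOf ν U) atTop ≤ rateOf ν x :=
  le_biSup (fun V ↦ -liminf (expRateOf ν V) atTop)
    (show U ∈ {V : Set X | IsOpen V ∧ x ∈ V} from ⟨hU, hx⟩)

theorem neg_iInf_rateOf_le_liminf_expRateOf {U : Set X} (hU : IsOpen U) :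
    -(⨅ x ∈ U, rateOf ν x) ≤ liminf (expRateOf ν U) atTop :=
  EReal.neg_le.2 (le_iInf₂ fun _ hx ↦ neg_liminf_expRateOf_le_rateOf ν hU hx)

theorem limsup_expRateOf_le_neg_iInf_limsupRateOf {K : Set X} (hK : IsCompact K) :
    limsup (expRateOf ν K) atTop ≤ -(⨅ x ∈ K, limsupRateOf ν x) := by
  refine EReal.le_neg.2 (le_of_forall_lt_imp_le_of_dense fun b hb ↦ EReal.le_neg.2 ?_)
  refine limsup_expRateOf_le_of_isCompact_of_forall_nhdsWithin ν hK fun x hx ↦ ?_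
  have hbx : b < limsupRateOf ν x := hb.trans_le (iInf₂_le x hx)
  obtain ⟨V, ⟨hVo, hxV⟩, hV⟩ := (lt_limsupRateOf_iff ν).1 hbx
  exact ⟨V, mem_nhdsWithin_of_mem_nhds (hVo.mem_nhds hxV), hV.le⟩

theorem weak_LDP_of_liminf_eq_limsup_general (heq : ∀ x, rateOf ν x = limsupRateOf ν x) :
    (∀ U : Set X, IsOpen U → -(⨅ x ∈ U, rateOf ν x) ≤ liminf (expRateOf ν U) atTop) ∧
      ∀ K : Set X, IsCompact K →
        limsup (expRateOf ν K) atTop ≤ -(⨅ x ∈ K, rateOf ν x) := by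
  refine ⟨fun U hU ↦ neg_iInf_rateOf_le_liminf_expRateOf ν hU, fun K hK ↦ ?_⟩
  simp only [heq]
  exact limsup_expRateOf_le_neg_iInf_limsupRateOf ν hK

end

/-- if the sup over open neighbourhoods of `- liminf` coincides everywhere with
the sup of `- limsup`, then the weak large deviation principle holds with rate function
`I = rateOf ν`. -/
theorem weak_LDP_of_liminf_eq_limsup
    {X : Type*} [TopologicalSpace X] [T2Space X] [RegularSpace X]
    [MeasurableSpace X] [BorelSpace X]
    (ν : ℕ → Measure X) (hprob : ∀ n, IsProbabilityMeasure (ν n))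
    (heq : ∀ x : X, rateOf ν x =
      ⨆ V ∈ {V : Set X | IsOpen V ∧ x ∈ V}, - Filter.limsup (expRateOf ν V) Filter.atTop) :
    -- lower bound for open sets
    (∀ U : Set X, IsOpen U →
      -(⨅ x ∈ U, rateOf ν x) ≤ Filter.liminf (expRateOf ν U) Filter.atTop) ∧
    -- upper bound for compact sets
    (∀ K : Set X, IsCompact K →
      Filter.limsup (expRateOf ν K) Filter.atTop ≤ -(⨅ x ∈ K, rateOf ν x)) :=
  weak_LDP_of_liminf_eq_limsup_general ν heq
end
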